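/- arXiv:2204.08998 — 2 statements merged into one kernel-verified Lean document; each statement's English description precedes it below -/
import Mathlib

section
/- Let L be an S×S real symmetric positive semidefinite matrix whose kernel (the null space of the linear map x ↦ Lx) is one-dimensional and spanned by a unit vector u₁, and let 0 = λ₁ < λ₂ ≤ ... ≤ λ_S be its eigenvalues in increasing order. Let W = I − u₁u₁ᵀ, let γ > 0, and let K be an integer with 1 ≤ K ≤ S−1. Then (1/(2γ))·Σ_{i=2}^{K+1} 1/λ_i is the minimum (least element, attained) of the set of values (trace(Z) + K·s)/(2γ) over all real s and all S×S real symmetric positive semidefinite matrices Z such that the 2S×2S block matrix [[Z + s·I, W], [W, L]] is positive semidefinite. -/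
open Matrix Finset

/-!
Write `L† = U diag(λ⁻¹) Uᵀ` for the Moore–Penrose inverse of `L = U diag(λ) Uᵀ`; the convention
`0⁻¹ = 0` makes this correct on the kernel. The projection `W` onto the range of `L` is
`L† L = L L†`, so a Schur complement, valid although `L` is singular, turns the block constraint
into `L† ≤ Z + s I`. What remains is Ky Fan's semidefinite program for the sum of the `K` largest
eigenvalues of `L†`: comparing diagonal entries in the eigenbasis on the top `K` indices gives the
lower bound, and it is attained by taking for `s` a threshold separating these eigenvalues from the
others and for `Z` the positive part of `L† - s I`.
-/

section SchurComplement

variable {m n R : Type*} [Finite m] [Fintype n]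
  [Ring R] [PartialOrder R] [StarRing R] [StarOrderedRing R]

theorem posSemidef_fromBlocks_mul_iff (A : Matrix m m R) {D : Matrix n n R} (hD : D.PosSemidef)
    (P : Matrix n m R) :
    (fromBlocks A (Pᴴ * D) (D * P) D).PosSemidef ↔ (A - Pᴴ * D * P).PosSemidef := by
  classical
  cases nonempty_fintype m
  constructor
  · intro hblock
    have hconj := hblock.conjTranspose_mul_mul_same (fromRows 1 (-P))
    simpa [conjTranspose_fromRows_eq_fromCols_conjTranspose, fromCols_mul_fromBlocks,
      fromCols_mul_fromRows, sub_eq_add_neg, Matrix.mul_assoc] using hconj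
  · intro hschur
    have hcorner : (fromBlocks (A - Pᴴ * D * P) 0 0 (0 : Matrix n n R)).PosSemidef := by
      have hconj := hschur.conjTranspose_mul_mul_same
        (fromCols (1 : Matrix m m R) (0 : Matrix m n R))
      rw [conjTranspose_fromCols_eq_fromRows_conjTranspose, fromRows_mul,
        fromRows_mul_fromCols] at hconj
      simpa using hconj
    have hrange : (fromBlocks (Pᴴ * D * P) (Pᴴ * D) (D * P) D).PosSemidef := by
      have hconj := hD.conjTranspose_mul_mul_same (fromCols P (1 : Matrix n n R))
      rw [conjTranspose_fromCols_eq_fromRows_conjTranspose, fromRows_mul,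
        fromRows_mul_fromCols] at hconj
      simpa using hconj
    simpa [fromBlocks_add] using hcorner.add hrange

end SchurComplement

section StarProjection

variable {n R : Type*} [Fintype n]

theorem mul_eq_left_of_mulVec_eq_zero [Ring R] {P Q : Matrix n n R} (hP : IsIdempotentElem P)
    (hker : ∀ x, P *ᵥ x = 0 → Q *ᵥ x = 0) : Q * P = Q := by
  classical
  have hzero : Q * (1 - P) = 0 := by
    refine ext_of_mulVec_single fun i ↦ ?_
    rw [← mulVec_mulVec, zero_mulVec]
    apply hker
    rw [mulVec_mulVec, hP.mul_one_sub_self, zero_mulVec]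
  rwa [mul_sub, mul_one, sub_eq_zero, eq_comm] at hzero

theorem eq_of_isStarProjection_of_mulVec_eq_zero_iff [Ring R] [StarRing R] {P Q : Matrix n n R}
    (hP : IsStarProjection P) (hQ : IsStarProjection Q)
    (hker : ∀ x, P *ᵥ x = 0 ↔ Q *ᵥ x = 0) : P = Q := by
  have hQP : Q * P = Q := mul_eq_left_of_mulVec_eq_zero hP.isIdempotentElem fun x ↦ (hker x).1
  have hPQ : P * Q = P := mul_eq_left_of_mulVec_eq_zero hQ.isIdempotentElem fun x ↦ (hker x).2
  calc
    P = star (P * Q) := by rw [hPQ, hP.isSelfAdjoint.star_eq]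
    _ = Q := by rw [star_mul, hP.isSelfAdjoint.star_eq, hQ.isSelfAdjoint.star_eq, hQP]

variable [DecidableEq n] [CommRing R] {u : n → R}

theorem isStarProjection_one_sub_vecMulVec_star [StarRing R] (hu : star u ⬝ᵥ u = 1) :
    IsStarProjection (1 - vecMulVec u (star u)) := by
  refine IsStarProjection.one_sub ⟨?_, ?_⟩
  · rw [IsIdempotentElem, vecMulVec_mul_vecMulVec, hu, one_smul]
  · rw [IsSelfAdjoint, star_eq_conjTranspose, conjTranspose_vecMulVec, star_star]

theorem one_sub_vecMulVec_mulVec_eq_zero_iff {v : n → R} (huv : v ⬝ᵥ u = 1) (x : n → R) :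
    (1 - vecMulVec u v) *ᵥ x = 0 ↔ ∃ c : R, x = c • u := by
  rw [sub_mulVec, one_mulVec, vecMulVec_mulVec, op_smul_eq_smul, sub_eq_zero]
  refine ⟨fun hx ↦ ⟨_, hx⟩, ?_⟩
  rintro ⟨c, rfl⟩
  rw [dotProduct_smul, huv, smul_eq_mul, mul_one]

end StarProjection

section OrthogonalDiagonalization

variable {m n R : Type*} [Fintype n] [DecidableEq n]

section CommRing

variable [CommRing R]

theorem conj_diagonal_mul_conj_diagonal {U : Matrix n n R} (hU : U * Uᵀ = 1) (d e : n → R) :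
    U * diagonal d * Uᵀ * (U * diagonal e * Uᵀ) = U * diagonal (d * e) * Uᵀ := by
  calc
    _ = U * diagonal d * (Uᵀ * U) * diagonal e * Uᵀ := by simp only [Matrix.mul_assoc]
    _ = U * diagonal (d * e) * Uᵀ := by
      rw [mul_eq_one_comm.mp hU, Matrix.mul_one, Matrix.mul_assoc U, diagonal_mul_diagonal,
        Pi.mul_def]

theorem trace_mul_mul_of_mul_eq_one [Fintype m] {U : Matrix m n R} {V : Matrix n m R}
    (hVU : V * U = 1) (A : Matrix n n R) :
    (U * A * V).trace = A.trace := by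
  rw [trace_mul_comm, ← Matrix.mul_assoc, hVU, Matrix.one_mul]

theorem isSelfAdjoint_conj_diagonal [StarRing R] [TrivialStar R] (U : Matrix m n R) (d : n → R) :
    IsSelfAdjoint (U * diagonal d * Uᵀ) := by
  simp [IsSelfAdjoint, star_eq_conjTranspose, conjTranspose_eq_transpose_of_trivial,
    Matrix.mul_assoc]

theorem posSemidef_conj_diagonal [Finite m] [PartialOrder R] [StarRing R] [StarOrderedRing R]
    [TrivialStar R] (U : Matrix m n R) {d : n → R} (hd : 0 ≤ d) :
    (U * diagonal d * Uᵀ).PosSemidef := by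
  simpa only [conjTranspose_eq_transpose_of_trivial] using
    (PosSemidef.diagonal hd).mul_mul_conjTranspose_same U

end CommRing

section PseudoInverse

variable [Field R] [StarRing R] [TrivialStar R] {L U W : Matrix n n R}

theorem eq_conj_diagonal_inv_mul_self (hU : U * Uᵀ = 1) (d : n → R) (hW : IsStarProjection W)
    (hker : ∀ x, W *ᵥ x = 0 ↔ (U * diagonal d * Uᵀ) *ᵥ x = 0) :
    W = U * diagonal (d⁻¹ * d) * Uᵀ := by
  refine eq_of_isStarProjection_of_mulVec_eq_zero_iff hW ⟨?_, isSelfAdjoint_conj_diagonal U _⟩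
    fun x ↦ (hker x).trans ⟨fun hx ↦ ?_, fun hx ↦ ?_⟩
  · rw [IsIdempotentElem, conj_diagonal_mul_conj_diagonal hU]
    congr 3
    ext i
    rcases eq_or_ne (d i) 0 with hzero | hne <;> simp [*]
  · rw [← conj_diagonal_mul_conj_diagonal hU, ← mulVec_mulVec, hx, mulVec_zero]
  · have hinv : d * (d⁻¹ * d) = d := by
      ext i
      simp [← mul_assoc]
    rw [← hinv, ← conj_diagonal_mul_conj_diagonal hU, ← mulVec_mulVec, hx, mulVec_zero]

theorem posSemidef_fromBlocks_isStarProjection_iff [PartialOrder R] [StarOrderedRing R]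
    (hL : L.PosSemidef) (hU : U * Uᵀ = 1) {d : n → R} (hdec : L = U * diagonal d * Uᵀ)
    (hW : IsStarProjection W) (hker : ∀ x, W *ᵥ x = 0 ↔ L *ᵥ x = 0) (A : Matrix n n R) :
    (fromBlocks A W W L).PosSemidef ↔ (A - U * diagonal d⁻¹ * Uᵀ).PosSemidef := by
  set P := U * diagonal d⁻¹ * Uᵀ
  have hW_eq : W = U * diagonal (d⁻¹ * d) * Uᵀ :=
    eq_conj_diagonal_inv_mul_self hU d hW (hdec ▸ hker)
  have hP_self : Pᴴ = P := isSelfAdjoint_conj_diagonal U _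
  have hPL : Pᴴ * L = W := by
    rw [hP_self, hdec, conj_diagonal_mul_conj_diagonal hU, hW_eq]
  have hLP : L * P = W := by
    rw [hdec, conj_diagonal_mul_conj_diagonal hU, hW_eq, mul_comm]
  have hPLP : Pᴴ * L * P = P := by
    rw [hPL, hW_eq, conj_diagonal_mul_conj_diagonal hU]
    congr 3
    ext i
    simpa using mul_inv_mul_cancel (d i)⁻¹
  have hschur := posSemidef_fromBlocks_mul_iff A hL P
  rwa [hPLP, hPL, hLP] at hschur

end PseudoInverse

end OrthogonalDiagonalization

section KyFan

theorem exists_le_on_and_ge_off {n α : Type*} [Finite n] [LinearOrder α] [Nonempty α]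
    {F : Finset n} {μ : n → α} (hF : ∀ i ∈ F, ∀ j ∉ F, μ j ≤ μ i) :
    ∃ t, (∀ i ∈ F, t ≤ μ i) ∧ ∀ j ∉ F, μ j ≤ t := by
  rcases F.eq_empty_or_nonempty with rfl | hne
  · obtain ⟨t, ht⟩ := (Set.finite_range μ).bddAbove
    exact ⟨t, by simp, fun j _ ↦ ht ⟨j, rfl⟩⟩
  · obtain ⟨k, hk, hmin⟩ := F.exists_min_image μ hne
    exact ⟨μ k, hmin, hF k hk⟩

variable {n : Type*} [Fintype n] [DecidableEq n] {U : Matrix n n ℝ}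

theorem sum_le_trace_add_card_mul (hU : U * Uᵀ = 1) {μ : n → ℝ} {Z : Matrix n n ℝ} {s : ℝ}
    (hZ : Z.PosSemidef) (hμ : (Z + s • 1 - U * diagonal μ * Uᵀ).PosSemidef) (F : Finset n) :
    ∑ i ∈ F, μ i ≤ Z.trace + #F * s := by
  have hU' : Uᵀ * U = 1 := mul_eq_one_comm.mp hU
  have hconj : Uᵀ * (Z + s • 1 - U * diagonal μ * Uᵀ) * U =
      Uᵀ * Z * U + s • 1 - diagonal μ := by
    calc
      _ = Uᵀ * Z * U + s • (Uᵀ * U) - Uᵀ * U * diagonal μ * (Uᵀ * U) := by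
        simp [mul_add, mul_sub, add_mul, sub_mul, Matrix.mul_assoc]
      _ = Uᵀ * Z * U + s • 1 - diagonal μ := by rw [hU', Matrix.one_mul, Matrix.mul_one]
  have hdiag (i : n) : μ i ≤ (Uᵀ * Z * U) i i + s := by
    have hnonneg := (hμ.conjTranspose_mul_mul_same U).diag_nonneg (i := i)
    rw [conjTranspose_eq_transpose_of_trivial, hconj] at hnonneg
    simpa using hnonneg
  have hZ_diag (i : n) : 0 ≤ (Uᵀ * Z * U) i i :=
    (hZ.conjTranspose_mul_mul_same U).diag_nonneg
  calc
    ∑ i ∈ F, μ i ≤ ∑ i ∈ F, ((Uᵀ * Z * U) i i + s) := sum_le_sum fun i _ ↦ hdiag i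
    _ = ∑ i ∈ F, (Uᵀ * Z * U) i i + #F * s := by rw [sum_add_distrib, sum_const, nsmul_eq_mul]
    _ ≤ ∑ i, (Uᵀ * Z * U) i i + #F * s :=
      add_le_add_left (sum_le_univ_sum_of_nonneg hZ_diag) _
    _ = Z.trace + #F * s := by rw [← trace_mul_mul_of_mul_eq_one hU Z]; rfl

theorem exists_posSemidef_trace_add_card_mul_eq_sum (hU : U * Uᵀ = 1) {μ : n → ℝ} {F : Finset n}
    (hF : ∀ i ∈ F, ∀ j ∉ F, μ j ≤ μ i) :
    ∃ (s : ℝ) (Z : Matrix n n ℝ), Z.PosSemidef ∧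
      (Z + s • 1 - U * diagonal μ * Uᵀ).PosSemidef ∧ Z.trace + #F * s = ∑ i ∈ F, μ i := by
  obtain ⟨t, ht_le, hle_t⟩ := exists_le_on_and_ge_off hF
  set d : n → ℝ := fun i ↦ (μ i - t)⁺
  have hslack : U * diagonal d * Uᵀ + t • 1 - U * diagonal μ * Uᵀ =
      U * diagonal (fun i ↦ (μ i - t)⁻) * Uᵀ := by
    have hdiag : diagonal (fun i ↦ (μ i - t)⁻) = diagonal d + t • 1 - diagonal μ := by
      rw [smul_one_eq_diagonal, diagonal_add, diagonal_sub]
      congr! 2 with i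
      linarith [posPart_sub_negPart (μ i - t)]
    rw [hdiag, mul_sub, sub_mul, mul_add, add_mul, mul_smul_one, smul_mul, hU]
  have htrace : (U * diagonal d * Uᵀ).trace = ∑ i ∈ F, (μ i - t) := by
    calc
      (U * diagonal d * Uᵀ).trace = ∑ i, d i := by
        rw [trace_mul_mul_of_mul_eq_one (mul_eq_one_comm.mp hU), trace_diagonal]
      _ = ∑ i ∈ F, d i := (sum_subset F.subset_univ fun i _ hi ↦
        posPart_eq_zero.2 (sub_nonpos.2 (hle_t i hi))).symm
      _ = ∑ i ∈ F, (μ i - t) :=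
        sum_congr rfl fun i hi ↦ posPart_eq_self.2 (sub_nonneg.2 (ht_le i hi))
  refine ⟨t, U * diagonal d * Uᵀ, posSemidef_conj_diagonal U fun i ↦ posPart_nonneg _, ?_, ?_⟩
  · exact hslack ▸ posSemidef_conj_diagonal U fun i ↦ negPart_nonneg _
  · rw [htrace, sum_sub_distrib, sum_const, nsmul_eq_mul, sub_add_cancel]

end KyFan

theorem stability_metric_sdp_general {n : Type*} [Fintype n] [DecidableEq n] {γ : ℝ} (hγ : 0 < γ)
    {L U W : Matrix n n ℝ} {lam : n → ℝ} (hL : L.PosSemidef) (hU : U * Uᵀ = 1)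
    (hdec : L = U * diagonal lam * Uᵀ) (hW : IsStarProjection W)
    (hker : ∀ x, W *ᵥ x = 0 ↔ L *ᵥ x = 0) {F : Finset n} {K : ℕ} (hcard : #F = K)
    (hpos : ∀ i ∈ F, 0 < lam i) (hmin : ∀ i ∈ F, ∀ j ∉ F, lam j ≠ 0 → lam i ≤ lam j) :
    IsLeast {v : ℝ | ∃ (s : ℝ) (Z : Matrix n n ℝ), Z.PosSemidef ∧
        (fromBlocks (Z + s • 1) W W L).PosSemidef ∧ v = (Z.trace + K * s) / (2 * γ)}
      (1 / (2 * γ) * ∑ i ∈ F, (lam i)⁻¹) := by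
  subst hcard
  have hblock := posSemidef_fromBlocks_isStarProjection_iff hL hU hdec hW hker
  have hinv : ∀ i ∈ F, ∀ j ∉ F, lam⁻¹ j ≤ lam⁻¹ i := by
    intro i hi j hj
    rcases eq_or_ne (lam j) 0 with hzero | hne
    · simpa [hzero] using (hpos i hi).le
    · exact inv_anti₀ (hpos i hi) (hmin i hi j hj hne)
  rw [one_div, inv_mul_eq_div]
  constructor
  · obtain ⟨s, Z, hZ, hslack, hvalue⟩ := exists_posSemidef_trace_add_card_mul_eq_sum hU hinv
    exact ⟨s, Z, hZ, (hblock _).2 hslack, by rw [hvalue]; rfl⟩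
  · rintro _ ⟨s, Z, hZ, hB, rfl⟩
    gcongr
    exact sum_le_trace_add_card_mul hU hZ ((hblock _).1 hB) F

theorem card_filter_one_le_and_le {S K : ℕ} (hKS : K < S) :
    #(univ.filter fun i : Fin S ↦ 1 ≤ (i : ℕ) ∧ (i : ℕ) ≤ K) = K := by
  have hIoc : (univ.filter fun i : Fin S ↦ 1 ≤ (i : ℕ) ∧ (i : ℕ) ≤ K) =
      Ioc ⟨0, by omega⟩ ⟨K, hKS⟩ := by
    ext i
    simp [Fin.lt_def, Fin.le_def, Nat.one_le_iff_ne_zero, Nat.pos_iff_ne_zero]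
  rw [hIoc, Fin.card_Ioc, Nat.sub_zero]

/-- Lemma 1 of the paper: for a PSD Laplacian-like matrix `L` with
one-dimensional kernel spanned by the unit vector `u₁` and eigenvalues
`0 = λ₁ < λ₂ ≤ … ≤ λ_S`, the quantity `(1/(2γ)) ∑_{i=2}^{K+1} 1/λ_i` is the
least value of `(trace Z + K s)/(2γ)` over all `s` and PSD `Z` such that the
block matrix `[[Z + s I, W], [W, L]]` with `W = I − u₁u₁ᵀ` is PSD. -/
theorem stability_metric_sdp (S K : ℕ) (hK1 : 1 ≤ K) (hKS : K ≤ S - 1)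
    (γ : ℝ) (hγ : 0 < γ)
    (L : Matrix (Fin S) (Fin S) ℝ) (hL : L.PosSemidef)
    (u₁ : Fin S → ℝ) (hu : ∑ i, u₁ i ^ 2 = 1)
    (hker₁ : L.mulVec u₁ = 0)
    (hker : ∀ x, L.mulVec x = 0 → ∃ c : ℝ, x = c • u₁)
    (lam : Fin S → ℝ) (hmono : Monotone lam)
    (hlam0 : lam ⟨0, by omega⟩ = 0) (hlam1 : 0 < lam ⟨1, by omega⟩)
    (U : Matrix (Fin S) (Fin S) ℝ) (hU : U * Uᵀ = 1)
    (hdec : L = U * Matrix.diagonal lam * Uᵀ) :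
    IsLeast {v : ℝ | ∃ (s : ℝ) (Z : Matrix (Fin S) (Fin S) ℝ),
        Z.PosSemidef ∧
        (Matrix.fromBlocks (Z + s • (1 : Matrix (Fin S) (Fin S) ℝ))
          (1 - Matrix.vecMulVec u₁ u₁) (1 - Matrix.vecMulVec u₁ u₁) L).PosSemidef ∧
        v = (Z.trace + K * s) / (2 * γ)}
      ((1 / (2 * γ)) *
        ∑ i ∈ univ.filter (fun i : Fin S => 1 ≤ (i : ℕ) ∧ (i : ℕ) ≤ K), (lam i)⁻¹) := by
  have hu_dot : u₁ ⬝ᵥ u₁ = 1 := by simpa only [dotProduct, ← sq] using hu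
  have hker_iff (x : Fin S → ℝ) : (1 - vecMulVec u₁ u₁) *ᵥ x = 0 ↔ L *ᵥ x = 0 := by
    rw [one_sub_vecMulVec_mulVec_eq_zero_iff hu_dot]
    refine ⟨?_, hker x⟩
    rintro ⟨c, rfl⟩
    rw [mulVec_smul, hker₁, smul_zero]
  refine stability_metric_sdp_general hγ hL hU hdec
    (isStarProjection_one_sub_vecMulVec_star hu_dot) hker_iff
    (card_filter_one_le_and_le (by omega))
    (fun i hi ↦ hlam1.trans_le (hmono (mem_filter.1 hi).2.1)) fun i hi j hj hne ↦ hmono ?_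
  have hj0 : (j : ℕ) ≠ 0 := fun h ↦ hne ((congrArg lam (Fin.ext h)).trans hlam0)
  simp only [mem_filter, mem_univ, true_and] at hi hj
  rw [Fin.le_def]
  omega
end

section
/- Let A be an n×n real symmetric matrix, B an n×m real matrix, C an m×m real symmetric positive semidefinite matrix, and let P be a Moore–Penrose pseudoinverse of C. Then the (n+m)×(n+m) block matrix [[A, B], [Bᵀ, C]] is positive semidefinite if and only if (I − C·P)·Bᵀ = 0 and A − B·P·Bᵀ is positive semidefinite. -/
open Matrix

/-!
If `C * K = Bᴴ`, then congruence by the unipotent matrix `[[1, 0], [K, 1]]` turns the block-diagonal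
matrix with blocks `A - Kᴴ * C * K` and `C` into `[[A, B], [Bᴴ, C]]`, so positive semidefiniteness
can be read off the two diagonal blocks. A generalized inverse `P` of `C` provides the solution
`K = P * Bᴴ` as soon as one exists, that is, when `(1 - C * P) * Bᴴ = 0`. This condition is forced
by positive semidefiniteness: the columns of `(1 - C * P)ᴴ` lie in the kernel of `C`, on such
vectors the quadratic form of the block matrix vanishes, and so the block matrix itself, in
particular `B`, annihilates them.
-/

section BlockCongruence

variable {m n R : Type*}

theorem fromBlocks_eq_conjTranspose_mul_mul [Fintype m] [Fintype n] [DecidableEq m] [DecidableEq n]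
    [Ring R] [StarRing R] (A : Matrix n n R) (C : Matrix m m R) (K : Matrix m n R) :
    fromBlocks A (Kᴴ * C) (C * K) C =
      (fromBlocks 1 0 K 1)ᴴ * fromBlocks (A - Kᴴ * C * K) 0 0 C * fromBlocks 1 0 K 1 := by
  simp [fromBlocks_conjTranspose, fromBlocks_multiply]

theorem posSemidef_fromBlocks_zero_zero_iff [Finite m] [Finite n] [Ring R] [PartialOrder R]
    [StarRing R] [AddLeftMono R] {A : Matrix n n R} {C : Matrix m m R} :
    (fromBlocks A 0 0 C).PosSemidef ↔ A.PosSemidef ∧ C.PosSemidef := by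
  have := Fintype.ofFinite m
  have := Fintype.ofFinite n
  refine ⟨fun h ↦ ⟨h.submatrix Sum.inl, h.submatrix Sum.inr⟩, fun ⟨hA, hC⟩ ↦ ?_⟩
  refine .of_dotProduct_mulVec_nonneg (hA.isHermitian.fromBlocks (by simp) hC.isHermitian)
    fun x ↦ ?_
  simpa [fromBlocks_mulVec, dotProduct_block, Pi.star_def, Function.comp_def] using
    add_nonneg (hA.dotProduct_mulVec_nonneg (x ∘ Sum.inl))
      (hC.dotProduct_mulVec_nonneg (x ∘ Sum.inr))

theorem posSemidef_fromBlocks_conjTranspose_mul_iff [Fintype m] [Finite n] [CommRing R]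
    [PartialOrder R] [StarRing R] [AddLeftMono R] {A : Matrix n n R} {C : Matrix m m R}
    (K : Matrix m n R) :
    (fromBlocks A (Kᴴ * C) (C * K) C).PosSemidef ↔
      (A - Kᴴ * C * K).PosSemidef ∧ C.PosSemidef := by
  classical
  have := Fintype.ofFinite n
  have unipotent : IsUnit (fromBlocks 1 0 K 1 : Matrix (n ⊕ m) (n ⊕ m) R) := by simp
  rw [fromBlocks_eq_conjTranspose_mul_mul, ← star_eq_conjTranspose,
    unipotent.posSemidef_star_left_conjugate_iff, posSemidef_fromBlocks_zero_zero_iff]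

end BlockCongruence

section GeneralizedInverse

variable {m n R : Type*} [Fintype m] [DecidableEq m]

theorem mul_conjTranspose_one_sub_mul_eq_zero [Ring R] [StarRing R] {C P : Matrix m m R}
    (hC : C.IsHermitian) (hP : C * P * C = C) : C * (1 - C * P)ᴴ = 0 := by
  have hP_adjoint : C * (Pᴴ * C) = C := by
    simpa only [conjTranspose_mul, hC.eq] using congrArg conjTranspose hP
  rw [conjTranspose_sub, conjTranspose_one, conjTranspose_mul, hC.eq, Matrix.mul_sub,
    Matrix.mul_one, hP_adjoint, sub_self]

theorem one_sub_mul_mul_eq_zero_iff {l : Type*} [Fintype l] [Ring R] {C : Matrix m l R}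
    {P : Matrix l m R} {X : Matrix m n R} :
    (1 - C * P) * X = 0 ↔ C * (P * X) = X := by
  rw [Matrix.sub_mul, Matrix.one_mul, sub_eq_zero, Matrix.mul_assoc, eq_comm]

theorem posSemidef_fromBlocks_iff_of_one_sub_mul_mul_eq_zero [Finite n] [CommRing R]
    [PartialOrder R] [StarRing R] [AddLeftMono R] {A : Matrix n n R} {B : Matrix n m R}
    {C P : Matrix m m R} (hC : C.IsHermitian) (hB : (1 - C * P) * Bᴴ = 0) :
    (fromBlocks A B Bᴴ C).PosSemidef ↔ (A - B * P * Bᴴ).PosSemidef ∧ C.PosSemidef := by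
  have hCK : C * (P * Bᴴ) = Bᴴ := one_sub_mul_mul_eq_zero_iff.mp hB
  have hKC : (P * Bᴴ)ᴴ * C = B := by
    simpa only [conjTranspose_mul C, conjTranspose_conjTranspose, hC.eq] using
      congrArg conjTranspose hCK
  simpa only [hCK, hKC, ← Matrix.mul_assoc B] using
    posSemidef_fromBlocks_conjTranspose_mul_iff (A := A) (C := C) (P * Bᴴ)

end GeneralizedInverse

section RCLike

open scoped ComplexOrder

variable {m n k 𝕜 : Type*} [Fintype m] [Finite n] [RCLike 𝕜]

theorem conjTranspose_mul_mul_eq_zero_iff_of_posSemidef {M : Matrix m m 𝕜} (hM : M.PosSemidef)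
    {Y : Matrix m k 𝕜} : Yᴴ * M * Y = 0 ↔ M * Y = 0 := by
  classical
  open scoped MatrixOrder in
  obtain ⟨N, rfl⟩ := CStarAlgebra.nonneg_iff_eq_star_mul_self.mp hM.nonneg
  have gram : Yᴴ * (star N * N) * Y = (N * Y)ᴴ * (N * Y) := by
    simp only [star_eq_conjTranspose, conjTranspose_mul, Matrix.mul_assoc]
  rw [gram, conjTranspose_mul_self_eq_zero, star_eq_conjTranspose,
    conjTranspose_mul_self_mul_eq_zero]

theorem mul_eq_zero_of_posSemidef_fromBlocks {A : Matrix n n 𝕜} {B : Matrix n m 𝕜}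
    {B' : Matrix m n 𝕜} {C : Matrix m m 𝕜} (hM : (fromBlocks A B B' C).PosSemidef)
    {X : Matrix m k 𝕜} (hX : C * X = 0) : B * X = 0 := by
  have := Fintype.ofFinite n
  let Y : Matrix (n ⊕ m) k 𝕜 := fromRows 0 X
  have block_mul : fromBlocks A B B' C * Y = fromRows (B * X) 0 := by
    simp [Y, fromBlocks_mul_fromRows, hX]
  have form_eq_zero : Yᴴ * fromBlocks A B B' C * Y = 0 := by
    rw [Matrix.mul_assoc, block_mul, conjTranspose_fromRows_eq_fromCols_conjTranspose,
      fromCols_mul_fromRows, conjTranspose_zero, Matrix.zero_mul, Matrix.mul_zero, add_zero]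
  have block_eq_zero : fromRows (B * X) (0 : Matrix m k 𝕜) = 0 := by
    rw [← block_mul, (conjTranspose_mul_mul_eq_zero_iff_of_posSemidef hM).mp form_eq_zero]
  exact congrArg toRows₁ block_eq_zero

theorem one_sub_mul_mul_conjTranspose_eq_zero_of_posSemidef_fromBlocks [DecidableEq m]
    {A : Matrix n n 𝕜} {B : Matrix n m 𝕜} {C P : Matrix m m 𝕜} (hP : C * P * C = C)
    (hM : (fromBlocks A B Bᴴ C).PosSemidef) : (1 - C * P) * Bᴴ = 0 := by
  have hC : C.IsHermitian := hM.isHermitian.submatrix Sum.inr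
  have hB : B * (1 - C * P)ᴴ = 0 :=
    mul_eq_zero_of_posSemidef_fromBlocks hM (mul_conjTranspose_one_sub_mul_eq_zero hC hP)
  simpa only [conjTranspose_mul, conjTranspose_conjTranspose, conjTranspose_zero] using
    congrArg conjTranspose hB

theorem schur_complement_psd_pseudoinverse_general [DecidableEq m] {A : Matrix n n 𝕜}
    {B : Matrix n m 𝕜} {C P : Matrix m m 𝕜} (hP : C * P * C = C) :
    (fromBlocks A B Bᴴ C).PosSemidef ↔
      C.PosSemidef ∧ (1 - C * P) * Bᴴ = 0 ∧ (A - B * P * Bᴴ).PosSemidef := by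
  constructor
  · intro hM
    have hB := one_sub_mul_mul_conjTranspose_eq_zero_of_posSemidef_fromBlocks hP hM
    have hC : C.PosSemidef := hM.submatrix Sum.inr
    exact ⟨hC, hB,
      ((posSemidef_fromBlocks_iff_of_one_sub_mul_mul_eq_zero hC.isHermitian hB).mp hM).1⟩
  · rintro ⟨hC, hB, hS⟩
    exact (posSemidef_fromBlocks_iff_of_one_sub_mul_mul_eq_zero hC.isHermitian hB).mpr ⟨hS, hC⟩

end RCLike

/-- Generalized Schur-complement characterization of positive semidefiniteness
of a block matrix `[[A, B], [Bᵀ, C]]` with a possibly singular PSD block `C`,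
where `P` is a Moore–Penrose pseudoinverse of `C`. -/
theorem schur_complement_psd_pseudoinverse (n m : ℕ)
    (A : Matrix (Fin n) (Fin n) ℝ) (hA : A.IsSymm)
    (B : Matrix (Fin n) (Fin m) ℝ)
    (C : Matrix (Fin m) (Fin m) ℝ) (hC : C.PosSemidef)
    (P : Matrix (Fin m) (Fin m) ℝ)
    (hP1 : C * P * C = C) (hP2 : P * C * P = P)
    (hP3 : (C * P)ᵀ = C * P) (hP4 : (P * C)ᵀ = P * C) :
    (Matrix.fromBlocks A B Bᵀ C).PosSemidef ↔
      (1 - C * P) * Bᵀ = 0 ∧ (A - B * P * Bᵀ).PosSemidef := by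
  simpa only [hC, true_and, conjTranspose_eq_transpose_of_trivial] using
    schur_complement_psd_pseudoinverse_general (A := A) (B := B) hP1
end
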